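/- arXiv:1905.07574 — 2 statements merged into one kernel-verified Lean document; each statement's English description precedes it below -/
import Mathlib

section
/- The group VP_3 is generated by a_{11}, c_{11}, a_{21}, a_{12}, b_{21}, b_{12}, and the map sending abstract generators to these elements induces an isomorphism onto VP_3 from the group presented by six generators A, C, x_{21}, x_{12}, y_{21}, y_{12} and the relations [x_{21}, x_{12}] = 1, [y_{21}, y_{12}] = 1, x_{21}^{C} = x_{21}, y_{21}^{C} = y_{21}, y_{12}^{C} = y_{12}^{(y_{12}x_{12})(y_{21}x_{21})^{−1}}, x_{12}^{C} = x_{12}^{(y_{12}x_{12})(y_{21}x_{21})^{−1}} (that is, conjugation of b_{12} and a_{12} by c_{11} equals conjugation by c_{12}c_{21}^{−1}, where c_{12} = b_{12}a_{12} and c_{21} = b_{21}a_{21}, and there are no relations involving A). -/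
/-!
Write `a, b, p, q, r, s` for `λ₁₂, λ₂₁, λ₁₃, λ₂₃, λ₃₁, λ₃₂`, and put `C = ba`, `x₂₁ = pq`,
`x₁₂ = pa`, `y₂₁ = sr`, `y₁₂ = br`. The passage from `(a, b, p, q, r, s)` to
`(a, C, x₂₁, x₁₂, y₂₁, y₁₂)` is an invertible change of generators, so it is enough to see that,
in any group, the six defining relations of `VP_3` are equivalent to the six new ones.

The intermediate form is a list of six commutations (`commutes_of_braid`, `braid_of_commutes`):
`x₂₁` with `x₁₂`, `y₂₁` with `y₁₂`, `C` with `x₂₁`, `C` with `y₂₁`, `y₁₂` with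
`bq = C x₁₂⁻¹ x₂₁`, and `x₁₂` with `sa = y₂₁ y₁₂⁻¹ C`. Each is one relation of `VP_3`, up to
cancelling a letter or using one of the others. Given the first four, the last two say that
`y₁₂` and `x₁₂` commute with `C c₂₁ c₁₂⁻¹`, where `c₂₁ = y₂₁x₂₁` and `c₁₂ = y₁₂x₁₂`: indeed
`C c₂₁ c₁₂⁻¹ = y₂₁ (C x₁₂⁻¹ x₂₁) y₁₂⁻¹ = y₂₁ y₁₂⁻¹ C x₁₂⁻¹ x₂₁`, the second equality once
`y₁₂` commutes with `C x₁₂⁻¹ x₂₁` (`commute_twist_iff`). The two presentations therefore map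
to each other by mutually inverse homomorphisms.
-/

namespace Paper

/-- Generators `λ_{i,j}`, `1 ≤ i ≠ j ≤ n` (here `0`-indexed: `i j : Fin n`, `i ≠ j`). -/
abbrev VPGen (n : ℕ) := {p : Fin n × Fin n // p.1 ≠ p.2}

/-- The generator `λ_{i,j}` as an element of the free group (junk value `1` if `i = j`). -/
def flam {n : ℕ} (i j : Fin n) : FreeGroup (VPGen n) :=
  if h : i ≠ j then FreeGroup.of ⟨(i, j), h⟩ else 1

/-- The defining relations of the virtual pure braid group `VP_n`:
`λ_{i,j}λ_{k,l} = λ_{k,l}λ_{i,j}` and `λ_{k,i}λ_{k,j}λ_{i,j} = λ_{i,j}λ_{k,j}λ_{k,i}`,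
where distinct letters stand for distinct indices. -/
def VPRels (n : ℕ) : Set (FreeGroup (VPGen n)) :=
  {r | (∃ i j k l : Fin n, i ≠ j ∧ k ≠ l ∧ i ≠ k ∧ i ≠ l ∧ j ≠ k ∧ j ≠ l ∧
          r = flam i j * flam k l * (flam k l * flam i j)⁻¹) ∨
       (∃ i j k : Fin n, i ≠ j ∧ k ≠ i ∧ k ≠ j ∧
          r = flam k i * flam k j * flam i j * (flam i j * flam k j * flam k i)⁻¹)}

/-- The virtual pure braid group `VP_n`, given by its presentation. -/
abbrev VP (n : ℕ) := PresentedGroup (VPRels n)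

/-- The generator `λ_{i,j}` as an element of `VP_n` (junk value `1` if `i = j`). -/
def glam {n : ℕ} (i j : Fin n) : VP n :=
  if h : i ≠ j then PresentedGroup.of ⟨(i, j), h⟩ else 1

/-- Conjugation `a^b = b⁻¹ * a * b`. -/
def cj {G : Type*} [Group G] (a b : G) : G := b⁻¹ * a * b

/-- Commutator `[a, b] = a⁻¹ * b⁻¹ * a * b`. -/
def cm {G : Type*} [Group G] (a b : G) : G := a⁻¹ * b⁻¹ * a * b

/-- `a_{11} = λ_{1,2}` in `VP_3`. -/
def a11 : VP 3 := glam 0 1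
/-- `b_{11} = λ_{2,1}`. -/
def b11 : VP 3 := glam 1 0
/-- `a_{21} = λ_{1,3}λ_{2,3}`. -/
def a21 : VP 3 := glam 0 2 * glam 1 2
/-- `a_{12} = λ_{1,3}λ_{1,2}`. -/
def a12 : VP 3 := glam 0 2 * glam 0 1
/-- `b_{21} = λ_{3,2}λ_{3,1}`. -/
def b21 : VP 3 := glam 2 1 * glam 2 0
/-- `b_{12} = λ_{2,1}λ_{3,1}`. -/
def b12 : VP 3 := glam 1 0 * glam 2 0
/-- `c_{11} = b_{11}a_{11}`. -/
def c11 : VP 3 := b11 * a11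
/-- `c_{21} = b_{21}a_{21}`. -/
def c21 : VP 3 := b21 * a21
/-- `c_{12} = b_{12}a_{12}`. -/
def c12 : VP 3 := b12 * a12

/-- Abstract generators for the presentation of `VP_3` in Corollary 4.2. -/
inductive VGen12
  | A | C | x21 | x12 | y21 | y12
  deriving DecidableEq

namespace VGen12
open FreeGroup
/-- The defining relations of Corollary 4.2: `[x_{21},x_{12}] = [y_{21},y_{12}] = 1`,
`x_{21}^C = x_{21}`, `y_{21}^C = y_{21}`, `y_{12}^C = y_{12}^{(y_{12}x_{12})(y_{21}x_{21})⁻¹}`,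
`x_{12}^C = x_{12}^{(y_{12}x_{12})(y_{21}x_{21})⁻¹}`. -/
def rels : Set (FreeGroup VGen12) :=
  {cm (of x21) (of x12), cm (of y21) (of y12),
   cj (of x21) (of C) * (of x21)⁻¹,
   cj (of y21) (of C) * (of y21)⁻¹,
   cj (of y12) (of C) * (cj (of y12) ((of y12 * of x12) * (of y21 * of x21)⁻¹))⁻¹,
   cj (of x12) (of C) * (cj (of x12) ((of y12 * of x12) * (of y21 * of x21)⁻¹))⁻¹}
end VGen12

/-! ### The relations in an arbitrary group -/

section Words

variable {G : Type*} [Group G]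

lemma cm_eq_one_iff (x y : G) : cm x y = 1 ↔ Commute x y := by
  have e : cm x y = (y * x)⁻¹ * (x * y) := by simp [cm, mul_assoc]
  rw [e, inv_mul_eq_one]
  exact eq_comm

lemma cj_eq_self_iff (x c : G) : cj x c * x⁻¹ = 1 ↔ Commute c x := by
  rw [mul_inv_eq_one, cj, mul_assoc, inv_mul_eq_iff_eq_mul]
  exact eq_comm

/-- Conjugations of `x` by `c` and by `d e⁻¹` agree exactly when `c e d⁻¹` centralizes `x`. -/
lemma cj_eq_cj_iff (x c d e : G) :
    cj x c * (cj x (d * e⁻¹))⁻¹ = 1 ↔ Commute x (c * e * d⁻¹) := by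
  rw [mul_inv_eq_one, cj, cj, commute_iff_eq]
  constructor
  · intro h
    have h' := congrArg (fun z => c * z * (e * d⁻¹)) h
    simpa [mul_assoc] using h'
  · intro h
    have h' := congrArg (fun z => c⁻¹ * z * (d * e⁻¹)) h
    simpa [mul_assoc] using h'

/-- The six commutations equivalent to the defining relations of `VP_3` in the generators
`C, x₂₁, x₁₂, y₂₁, y₁₂`. -/
structure SixCommutes (C x21 x12 y21 y12 : G) : Prop where
  xx : Commute x21 x12
  yy : Commute y21 y12
  cx : Commute C x21
  cy : Commute C y21
  yt : Commute y12 (C * x12⁻¹ * x21)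
  xt : Commute x12 (y21 * y12⁻¹ * C)

/-- The six defining relations of `VP_3` on `a, b, p, q, r, s`, standing for
`λ₁₂, λ₂₁, λ₁₃, λ₂₃, λ₃₁, λ₃₂`. -/
structure SixBraid (a b p q r s : G) : Prop where
  r123 : a * p * q = q * p * a
  r132 : p * a * s = s * a * p
  r213 : b * q * p = p * q * b
  r231 : q * b * r = r * b * q
  r312 : r * s * a = a * s * r
  r321 : s * r * b = b * r * s

lemma commutes_of_braid {a b p q r s : G} (h : SixBraid a b p q r s) :
    SixCommutes (b * a) (p * q) (p * a) (s * r) (b * r) := by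
  have e1 : b * a * (p * a)⁻¹ * (p * q) = b * q := by group
  have e2 : s * r * (b * r)⁻¹ * (b * a) = s * a := by group
  refine ⟨?_, ?_, ?_, ?_, ?_, ?_⟩
  · calc p * q * (p * a) = p * (q * p * a) := by group
      _ = p * a * (p * q) := by rw [← h.r123]; group
  · calc s * r * (b * r) = (s * r * b) * r := by group
      _ = b * r * (s * r) := by rw [h.r321]; group
  · calc b * a * (p * q) = b * (a * p * q) := by group
      _ = b * q * p * a := by rw [h.r123]; group
      _ = p * q * (b * a) := by rw [h.r213]; group
  · calc b * a * (s * r) = b * (a * s * r) := by group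
      _ = b * r * s * a := by rw [← h.r312]; group
      _ = s * r * (b * a) := by rw [← h.r321]; group
  · rw [e1]
    calc b * r * (b * q) = b * (r * b * q) := by group
      _ = b * q * (b * r) := by rw [← h.r231]; group
  · rw [e2]
    calc p * a * (s * a) = (p * a * s) * a := by group
      _ = s * a * (p * a) := by rw [h.r132]; group

lemma braid_of_commutes {a b p q r s : G}
    (h : SixCommutes (b * a) (p * q) (p * a) (s * r) (b * r)) : SixBraid a b p q r s := by
  obtain ⟨xx, yy, cx, cy, yt, xt⟩ := h
  have e1 : b * a * (p * a)⁻¹ * (p * q) = b * q := by group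
  have e2 : s * r * (b * r)⁻¹ * (b * a) = s * a := by group
  rw [e1] at yt
  rw [e2] at xt
  rw [commute_iff_eq] at *
  have h1 : a * p * q = q * p * a := by
    apply mul_left_cancel (a := p)
    simpa [mul_assoc] using xx.symm
  have h6 : s * r * b = b * r * s := by
    apply mul_right_cancel (b := r)
    simpa [mul_assoc] using yy
  refine ⟨h1, ?_, ?_, ?_, ?_, h6⟩
  · apply mul_right_cancel (b := a)
    simpa [mul_assoc] using xt
  · apply mul_right_cancel (b := a)
    calc b * q * p * a = b * (q * p * a) := by group
      _ = b * a * (p * q) := by rw [← h1]; group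
      _ = p * q * b * a := by rw [cx]; group
  · apply mul_left_cancel (a := b)
    simpa [mul_assoc] using yt.symm
  · apply mul_left_cancel (a := b)
    calc b * (r * s * a) = (b * r * s) * a := by group
      _ = s * r * (b * a) := by rw [← h6]; group
      _ = b * (a * s * r) := by rw [← cy]; group

/-- If `y₂₁` commutes with `y₁₂` and `C`, and `x₂₁` with `x₁₂`, then `y₁₂` commutes with the
twisting element `C c₂₁ c₁₂⁻¹`, where `c₂₁ = y₂₁x₂₁` and `c₁₂ = y₁₂x₁₂`, exactly when
it commutes with `C x₁₂⁻¹ x₂₁`. -/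
lemma commute_twist_iff {C x21 x12 y21 y12 : G} (xx : Commute x21 x12) (yy : Commute y21 y12)
    (cy : Commute C y21) :
    Commute y12 (C * (y21 * x21) * (y12 * x12)⁻¹) ↔ Commute y12 (C * x12⁻¹ * x21) := by
  have e : C * (y21 * x21) * (y12 * x12)⁻¹ = y21 * (C * x12⁻¹ * x21) * y12⁻¹ := by
    calc C * (y21 * x21) * (y12 * x12)⁻¹ = (C * y21) * (x21 * x12⁻¹) * y12⁻¹ := by group
      _ = y21 * (C * x12⁻¹ * x21) * y12⁻¹ := by
        rw [cy.eq, (xx.inv_right).eq]; group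
  rw [e]
  constructor
  · intro h
    have h' := (yy.symm.inv_right.mul_right h).mul_right (Commute.refl y12)
    simpa [mul_assoc] using h'
  · intro h
    exact (yy.symm.mul_right h).mul_right (Commute.refl y12).inv_right

/-- Once `y₁₂` commutes with `C x₁₂⁻¹ x₂₁`, the twisting element `C c₂₁ c₁₂⁻¹` differs from
`y₂₁ y₁₂⁻¹ C` by a factor centralizing `x₁₂`. -/
lemma commute_twist_iff' {C x21 x12 y21 y12 : G} (xx : Commute x21 x12)
    (cy : Commute C y21) (yt : Commute y12 (C * x12⁻¹ * x21)) :
    Commute x12 (C * (y21 * x21) * (y12 * x12)⁻¹) ↔ Commute x12 (y21 * y12⁻¹ * C) := by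
  have e : C * (y21 * x21) * (y12 * x12)⁻¹ = (y21 * y12⁻¹ * C) * (x12⁻¹ * x21) := by
    calc C * (y21 * x21) * (y12 * x12)⁻¹ = (C * y21) * (x21 * x12⁻¹) * y12⁻¹ := by group
      _ = y21 * ((C * x12⁻¹ * x21) * y12⁻¹) := by
        rw [cy.eq, (xx.inv_right).eq]; group
      _ = (y21 * y12⁻¹ * C) * (x12⁻¹ * x21) := by
        rw [← (yt.inv_left).eq]; group
  have k : Commute x12 (x12⁻¹ * x21) := (Commute.refl x12).inv_right.mul_right xx.symm
  rw [e]
  constructor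
  · intro h
    have h' := h.mul_right k.inv_right
    simpa [mul_assoc] using h'
  · intro h
    exact h.mul_right k

end Words

/-! ### Homomorphisms out of the two presented groups -/

section Universal

variable {G : Type*} [Group G]

/-- A map out of the six abstract generators, given by its values. -/
def vals (A C x21 x12 y21 y12 : G) : VGen12 → G
  | .A => A | .C => C | .x21 => x21 | .x12 => x12 | .y21 => y21 | .y12 => y12

lemma rels_iff (A C x21 x12 y21 y12 : G) :
    (∀ r ∈ VGen12.rels, FreeGroup.lift (vals A C x21 x12 y21 y12) r = 1) ↔
      SixCommutes C x21 x12 y21 y12 := by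
  have key : (∀ r ∈ VGen12.rels, FreeGroup.lift (vals A C x21 x12 y21 y12) r = 1) ↔
      cm x21 x12 = 1 ∧ cm y21 y12 = 1 ∧ cj x21 C * x21⁻¹ = 1 ∧ cj y21 C * y21⁻¹ = 1 ∧
      cj y12 C * (cj y12 ((y12 * x12) * (y21 * x21)⁻¹))⁻¹ = 1 ∧
      cj x12 C * (cj x12 ((y12 * x12) * (y21 * x21)⁻¹))⁻¹ = 1 := by
    simp only [VGen12.rels, Set.mem_insert_iff, Set.mem_singleton_iff, forall_eq_or_imp,
      forall_eq, cm, cj, map_mul, map_inv, FreeGroup.lift_apply_of, vals]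
  rw [key, cm_eq_one_iff, cm_eq_one_iff, cj_eq_self_iff, cj_eq_self_iff, cj_eq_cj_iff,
    cj_eq_cj_iff]
  constructor
  · rintro ⟨xx, yy, cx, cy, h5, h6⟩
    have yt := (commute_twist_iff xx yy cy).1 h5
    exact ⟨xx, yy, cx, cy, yt, (commute_twist_iff' xx cy yt).1 h6⟩
  · rintro ⟨xx, yy, cx, cy, yt, xt⟩
    exact ⟨xx, yy, cx, cy, (commute_twist_iff xx yy cy).2 yt, (commute_twist_iff' xx cy yt).2 xt⟩

/-- A map out of the generators of `VP_3`, given by the matrix of its values. -/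
def lvals (a b p q r s : G) (g : VPGen 3) : G :=
  (![![1, a, p], ![b, 1, q], ![r, s, 1]] : Fin 3 → Fin 3 → G) g.1.1 g.1.2

lemma lift_flam (a b p q r s : G) (i j : Fin 3) :
    FreeGroup.lift (lvals a b p q r s) (flam i j) =
      (![![1, a, p], ![b, 1, q], ![r, s, 1]] : Fin 3 → Fin 3 → G) i j := by
  unfold flam
  split_ifs with h
  · simp [lvals]
  · obtain rfl : i = j := not_not.1 h
    fin_cases i <;> simp

lemma vpRels_of_braid {a b p q r s : G} (h : SixBraid a b p q r s) :
    ∀ w ∈ VPRels 3, FreeGroup.lift (lvals a b p q r s) w = 1 := by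
  obtain ⟨h1, h2, h3, h4, h5, h6⟩ := h
  rintro w (⟨i, j, k, l, hij, hkl, hik, hil, hjk, hjl, rfl⟩ | ⟨i, j, k, hij, hki, hkj, rfl⟩)
  · -- Four distinct indices do not exist in `Fin 3`.
    omega
  · simp only [map_mul, map_inv, lift_flam, mul_inv_eq_one]
    fin_cases i <;> fin_cases j <;> first | exact absurd rfl hij | skip
    all_goals fin_cases k <;> first | exact absurd rfl hki | exact absurd rfl hkj | skip
    all_goals first
      | exact h1 | exact h2 | exact h3 | exact h4 | exact h5 | exact h6

lemma glam_braid {i j k : Fin 3} (hij : i ≠ j) (hki : k ≠ i) (hkj : k ≠ j) :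
    (glam k i * glam k j * glam i j : VP 3) = glam i j * glam k j * glam k i := by
  have hm : ∀ i j : Fin 3, PresentedGroup.mk (VPRels 3) (flam i j) = glam i j := by
    intro i j
    unfold flam glam
    split_ifs
    · rfl
    · simp
  have h := PresentedGroup.one_of_mem (rels := VPRels 3) (Or.inr ⟨i, j, k, hij, hki, hkj, rfl⟩)
  simpa only [map_mul, map_inv, hm, mul_inv_eq_one] using h

lemma sixBraid_glam : SixBraid (glam 0 1 : VP 3) (glam 1 0) (glam 0 2) (glam 1 2) (glam 2 0)
    (glam 2 1) :=
  ⟨glam_braid (by decide) (by decide) (by decide), glam_braid (by decide) (by decide) (by decide),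
   glam_braid (by decide) (by decide) (by decide), glam_braid (by decide) (by decide) (by decide),
   glam_braid (by decide) (by decide) (by decide), glam_braid (by decide) (by decide) (by decide)⟩

end Universal

/-! ### The mutually inverse homomorphisms -/

/-- The homomorphism from the six-generator presentation to `VP_3`. -/
def toVP : PresentedGroup VGen12.rels →* VP 3 :=
  PresentedGroup.toGroup (f := vals a11 c11 a21 a12 b21 b12)
    ((rels_iff _ _ _ _ _ _).2 (commutes_of_braid sixBraid_glam))

/-- The abstract generators, as elements of the presented group. -/
abbrev gen (v : VGen12) : PresentedGroup VGen12.rels := PresentedGroup.of v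

lemma sixCommutes_gen : SixCommutes (gen .C) (gen .x21) (gen .x12) (gen .y21) (gen .y12) := by
  refine (rels_iff (gen .A) _ _ _ _ _).1 fun r hr => ?_
  have e : FreeGroup.lift (vals (gen .A) (gen .C) (gen .x21) (gen .x12) (gen .y21) (gen .y12)) =
      PresentedGroup.mk VGen12.rels := by
    ext v
    cases v <;> simp [vals] <;> rfl
  rw [e]
  exact PresentedGroup.one_of_mem hr

/-- The expressions of the `λ_{i,j}` in the six new generators satisfy the relations of `VP_3`. -/
lemma sixBraid_gen : SixBraid (gen .A) (gen .C * (gen .A)⁻¹) (gen .x12 * (gen .A)⁻¹)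
    (gen .A * (gen .x12)⁻¹ * gen .x21) (gen .A * (gen .C)⁻¹ * gen .y12)
    (gen .y21 * (gen .y12)⁻¹ * gen .C * (gen .A)⁻¹) := by
  apply braid_of_commutes
  convert sixCommutes_gen using 1 <;> simp [mul_assoc]

/-- The homomorphism from `VP_3` inverse to `toVP`. -/
def ofVP : VP 3 →* PresentedGroup VGen12.rels :=
  PresentedGroup.toGroup (vpRels_of_braid sixBraid_gen)

lemma ofVP_glam {i j : Fin 3} (h : i ≠ j) :
    ofVP (glam i j) = lvals (gen .A) (gen .C * (gen .A)⁻¹) (gen .x12 * (gen .A)⁻¹)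
      (gen .A * (gen .x12)⁻¹ * gen .x21) (gen .A * (gen .C)⁻¹ * gen .y12)
      (gen .y21 * (gen .y12)⁻¹ * gen .C * (gen .A)⁻¹) ⟨(i, j), h⟩ := by
  rw [glam, dif_pos h]
  exact PresentedGroup.toGroup.of _

lemma toVP_gen (v : VGen12) : toVP (gen v) = vals a11 c11 a21 a12 b21 b12 v :=
  PresentedGroup.toGroup.of _

lemma ofVP_comp_toVP : ofVP.comp toVP = MonoidHom.id _ := by
  have h01 := ofVP_glam (i := 0) (j := 1) (by decide)
  have h10 := ofVP_glam (i := 1) (j := 0) (by decide)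
  have h02 := ofVP_glam (i := 0) (j := 2) (by decide)
  have h12 := ofVP_glam (i := 1) (j := 2) (by decide)
  have h20 := ofVP_glam (i := 2) (j := 0) (by decide)
  have h21 := ofVP_glam (i := 2) (j := 1) (by decide)
  refine PresentedGroup.ext fun v => ?_
  change ofVP (toVP (gen v)) = gen v
  rw [toVP_gen]
  cases v <;>
    simp [vals, a11, c11, b11, a21, a12, b21, b12, h01, h10, h02, h12, h20, h21, lvals, mul_assoc]

lemma toVP_comp_ofVP : toVP.comp ofVP = MonoidHom.id _ := by
  refine PresentedGroup.ext fun ⟨⟨i, j⟩, h⟩ => ?_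
  have e : (PresentedGroup.of ⟨(i, j), h⟩ : VP 3) = glam i j := by
    rw [glam, dif_pos h]
  change toVP (ofVP (PresentedGroup.of ⟨(i, j), h⟩)) = PresentedGroup.of ⟨(i, j), h⟩
  rw [e, ofVP_glam h]
  fin_cases i <;> fin_cases j <;> first
    | exact absurd rfl h
    | simp [lvals, toVP_gen, vals, a11, c11, b11, a21, a12, b21, b12, mul_assoc]

lemma toVP_bijective : Function.Bijective toVP :=
  Function.bijective_iff_has_inverse.2
    ⟨ofVP, DFunLike.congr_fun ofVP_comp_toVP, DFunLike.congr_fun toVP_comp_ofVP⟩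

/-- Corollary 4.2: `VP_3` is generated by `a_{11}, c_{11}, a_{21}, a_{12}, b_{21}, b_{12}`,
and the map sending the abstract generators to these elements induces an isomorphism from
the group presented by six generators and the relations `[x_{21},x_{12}] = [y_{21},y_{12}] = 1`,
`x_{21}^{c_{11}} = x_{21}`, `y_{21}^{c_{11}} = y_{21}`, `y_{12}^{c_{11}} = y_{12}^{c_{12}c_{21}⁻¹}`,
`x_{12}^{c_{11}} = x_{12}^{c_{12}c_{21}⁻¹}` onto `VP_3`. -/
theorem statement12 :
    Subgroup.closure {a11, c11, a21, a12, b21, b12} = (⊤ : Subgroup (VP 3)) ∧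
    ∃ f : PresentedGroup VGen12.rels →* VP 3,
      f (PresentedGroup.of VGen12.A) = a11 ∧
      f (PresentedGroup.of VGen12.C) = c11 ∧
      f (PresentedGroup.of VGen12.x21) = a21 ∧
      f (PresentedGroup.of VGen12.x12) = a12 ∧
      f (PresentedGroup.of VGen12.y21) = b21 ∧
      f (PresentedGroup.of VGen12.y12) = b12 ∧
      Function.Bijective f := by
  refine ⟨?_, toVP, toVP_gen _, toVP_gen _, toVP_gen _, toVP_gen _, toVP_gen _, toVP_gen _,
    toVP_bijective⟩
  rw [eq_top_iff, ← MonoidHom.range_eq_top.2 toVP_bijective.2, MonoidHom.range_eq_map,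
    ← PresentedGroup.closure_range_of, MonoidHom.map_closure, Subgroup.closure_le]
  rintro _ ⟨_, ⟨v, rfl⟩, rfl⟩
  rw [toVP_gen]
  apply Subgroup.subset_closure
  cases v <;> simp [vals]

end Paper
end

section
/- In the group VP_3, for every integer k the following conjugation formulas hold: a_{12}^{c_{11}^k} = a_{12}^{c_{12}^k c_{21}^{−k}} and b_{12}^{c_{11}^k} = b_{12}^{c_{12}^k c_{21}^{−k}}. -/
/-!
The element `w = λ_{3,2}λ_{2,3}` commutes with both `a_{12}` and `b_{12}`, hence with `c_{12}`,
and `c_{11}` commutes with `c_{21}`; moreover `c_{11} c_{21} = w c_{12}`. Consequently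
`c_{11}^k c_{21}^k = w^k c_{12}^k`, that is, `c_{11}^k = w^k c_{12}^k c_{21}^{-k}`. Conjugation of
`a_{12}` or `b_{12}` by `w^k` is trivial, which gives both formulas.
-/


namespace Paper

/-- The triple relation `λ_{k,i}λ_{k,j}λ_{i,j} = λ_{i,j}λ_{k,j}λ_{k,i}` holds in `VP_n`. -/
lemma glam_triple {n : ℕ} (i j k : Fin n) (hij : i ≠ j) (hki : k ≠ i) (hkj : k ≠ j) :
    (glam k i * glam k j * glam i j : VP n) = glam i j * glam k j * glam k i := by
  have hmk : ∀ p q : Fin n, PresentedGroup.mk (VPRels n) (flam p q) = glam p q := by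
    intro p q
    unfold flam glam
    split_ifs
    · rfl
    · exact map_one _
  have h : PresentedGroup.mk (VPRels n)
      (flam k i * flam k j * flam i j * (flam i j * flam k j * flam k i)⁻¹) = 1 :=
    PresentedGroup.one_of_mem (Or.inr ⟨i, j, k, hij, hki, hkj, rfl⟩)
  rw [map_mul, map_inv, mul_inv_eq_one] at h
  simpa only [map_mul, hmk] using h

lemma commute_w_a12 : Commute (glam 2 1 * glam 1 2 : VP 3) a12 := by
  have h1 := glam_triple (n := 3) 1 2 0 (by decide) (by decide) (by decide)
  have h2 := glam_triple (n := 3) 2 1 0 (by decide) (by decide) (by decide)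
  unfold a12
  calc (glam 2 1 * glam 1 2 * (glam 0 2 * glam 0 1) : VP 3)
      = glam 2 1 * (glam 1 2 * glam 0 2 * glam 0 1) := by group
    _ = glam 2 1 * glam 0 1 * glam 0 2 * glam 1 2 := by rw [← h1]; group
    _ = glam 0 2 * glam 0 1 * (glam 2 1 * glam 1 2) := by rw [← h2]; group

lemma commute_w_b12 : Commute (glam 2 1 * glam 1 2 : VP 3) b12 := by
  have h1 := glam_triple (n := 3) 2 0 1 (by decide) (by decide) (by decide)
  have h2 := glam_triple (n := 3) 1 0 2 (by decide) (by decide) (by decide)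
  unfold b12
  calc (glam 2 1 * glam 1 2 * (glam 1 0 * glam 2 0) : VP 3)
      = glam 2 1 * (glam 1 2 * glam 1 0 * glam 2 0) := by group
    _ = glam 2 1 * glam 2 0 * glam 1 0 * glam 1 2 := by rw [h1]; group
    _ = glam 1 0 * glam 2 0 * (glam 2 1 * glam 1 2) := by rw [h2]; group

/-- A normal form of `c_{11} c_{21}` from which both the commutation of `c_{11}` with `c_{21}` and
the factorization through `c_{12}` are read off. -/
lemma c11_mul_c21_eq :
    c11 * c21 = glam 2 1 * glam 2 0 * glam 1 0 * (glam 0 1 * glam 0 2 * glam 1 2) := by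
  have h1 := glam_triple (n := 3) 0 1 2 (by decide) (by decide) (by decide)
  have h2 := glam_triple (n := 3) 1 0 2 (by decide) (by decide) (by decide)
  unfold c11 c21 b11 a11 b21 a21
  calc (glam 1 0 * glam 0 1 * (glam 2 1 * glam 2 0 * (glam 0 2 * glam 1 2)) : VP 3)
      = glam 1 0 * (glam 0 1 * glam 2 1 * glam 2 0) * (glam 0 2 * glam 1 2) := by group
    _ = glam 1 0 * glam 2 0 * glam 2 1 * (glam 0 1 * glam 0 2 * glam 1 2) := by rw [← h1]; group
    _ = _ := by rw [← h2]

lemma commute_c11_c21 : Commute c11 c21 := by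
  have h1 := glam_triple (n := 3) 1 2 0 (by decide) (by decide) (by decide)
  have h2 := glam_triple (n := 3) 0 2 1 (by decide) (by decide) (by decide)
  have h : c11 * c21 = c21 * c11 := by
    rw [c11_mul_c21_eq, h1]
    unfold c11 c21 b11 a11 b21 a21
    calc (glam 2 1 * glam 2 0 * glam 1 0 * (glam 1 2 * glam 0 2 * glam 0 1) : VP 3)
        = glam 2 1 * glam 2 0 * (glam 1 0 * glam 1 2 * glam 0 2) * glam 0 1 := by group
      _ = _ := by rw [h2]; group
  exact h

lemma c11_mul_c21 : c11 * c21 = glam 2 1 * glam 1 2 * c12 := by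
  have h1 := glam_triple (n := 3) 1 2 0 (by decide) (by decide) (by decide)
  have h2 := glam_triple (n := 3) 2 0 1 (by decide) (by decide) (by decide)
  rw [c11_mul_c21_eq, h1]
  unfold c12 b12 a12
  calc (glam 2 1 * glam 2 0 * glam 1 0 * (glam 1 2 * glam 0 2 * glam 0 1) : VP 3)
      = glam 2 1 * (glam 2 0 * glam 1 0 * glam 1 2) * (glam 0 2 * glam 0 1) := by group
    _ = _ := by rw [← h2]; group

/-- The powers split because `w = λ_{3,2}λ_{2,3}` commutes with `c_{12}` and `c_{11}` with
`c_{21}`. -/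
lemma c11_zpow (k : ℤ) :
    c11 ^ k = (glam 2 1 * glam 1 2 : VP 3) ^ k * (c12 ^ k * c21 ^ (-k)) := by
  have hw : Commute (glam 2 1 * glam 1 2 : VP 3) c12 :=
    commute_w_b12.mul_right commute_w_a12
  rw [← mul_assoc, ← hw.mul_zpow, ← c11_mul_c21, commute_c11_c21.mul_zpow, zpow_neg,
    mul_inv_cancel_right]

lemma cj_mul_of_commute {G : Type*} [Group G] {x u : G} (v : G) (h : Commute u x) :
    cj x (u * v) = cj x v := by
  unfold cj
  rw [mul_inv_rev, mul_assoc, mul_assoc, ← mul_assoc x, ← h.eq]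
  group

/-- Lemma 4.12: in `VP_3`, `a_{12}^{c_{11}^k} = a_{12}^{c_{12}^k c_{21}^{-k}}` and
`b_{12}^{c_{11}^k} = b_{12}^{c_{12}^k c_{21}^{-k}}` for all `k ∈ ℤ`. -/
theorem statement14 (k : ℤ) :
    cj a12 (c11 ^ k) = cj a12 (c12 ^ k * c21 ^ (-k)) ∧
    cj b12 (c11 ^ k) = cj b12 (c12 ^ k * c21 ^ (-k)) := by
  rw [c11_zpow k]
  exact ⟨cj_mul_of_commute _ (commute_w_a12.zpow_left k),
    cj_mul_of_commute _ (commute_w_b12.zpow_left k)⟩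

end Paper
end
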